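/- Let X₁, X₂ be complex Hilbert spaces, X = X₁ × X₂, A a linear operator on X with domain D(A), E(x₁,x₂) = (E₁x₁, 0), Q(x₁,x₂) = (Q₁x₁, Q₂x₂) with E₁, Q₁, Q₂ bounded and boundedly invertible and E₁*Q₁ coercive. Suppose A is maximally dissipative and there exists m₁ > 0 such that ‖E x‖² + ‖A(Q x)‖² ≥ m₁²‖x‖² for all x with Qx ∈ D(A). Then for every s ∈ ℂ with Re s > 0 the operator s·E − A∘Q (with domain {x : Qx ∈ D(A)}) is boundedly invertible. -/

import Mathlib

/-!
Substituting `y = Q x` turns the pencil `s E - A Q` into `s M - A` with `M = E Q⁻¹ = diag(E₁ Q₁⁻¹, 0)`.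
Coercivity of `E₁* Q₁` says that `⟨M y, y⟩` is real and bounded below by a multiple of `‖y₁‖²`.
The operators `(1 - t) l + t s M - A`, `t ∈ [0, 1]`, join `l - A`, which is onto by maximal
dissipativity, to `s M - A`. Dissipativity controls `(1 - t) ‖y‖²` and `t ‖y₁‖²` by `‖f‖ ‖y‖`, where
`f` is the image of `y`. For `t ≤ 1/2` the first of these bounds `‖y‖` by `‖f‖`; for `t ≥ 1/2` the
second does, together with the hypothesis `‖E x‖² + ‖A Q x‖² ≥ m₁² ‖x‖²` (`apriori_real`). The bound
is uniform in `t`, so the method of continuity (`surjective_of_continuity`) carries surjectivity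
from `t = 0` to `t = 1`, and at `t = 1` the bound gives injectivity and boundedness of the inverse.
-/

noncomputable section

open Complex ContinuousLinearMap
open scoped ComplexInnerProductSpace

variable {X₁ X₂ : Type*}
  [NormedAddCommGroup X₁] [InnerProductSpace ℂ X₁] [CompleteSpace X₁]
  [NormedAddCommGroup X₂] [InnerProductSpace ℂ X₂] [CompleteSpace X₂]

/-- `Re ⟨x, y⟩` on the Hilbert-space product `X₁ × X₂` (componentwise sum). -/
def reInner2 (x y : X₁ × X₂) : ℝ := (⟪x.1, y.1⟫).re + (⟪x.2, y.2⟫).re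

/-- A (possibly unbounded) operator on the Hilbert space `X₁ × X₂` is dissipative if
`Re ⟨A x, x⟩ ≤ 0` for all `x` in its domain. -/
def DissipativeProd (A : (X₁ × X₂) →ₗ.[ℂ] (X₁ × X₂)) : Prop :=
  ∀ x : A.domain, reInner2 (A x) (x : X₁ × X₂) ≤ 0

/-- Maximally dissipative: dissipative and `λ I - A` surjective for some `λ > 0`. -/
def MaxDissipativeProd (A : (X₁ × X₂) →ₗ.[ℂ] (X₁ × X₂)) : Prop :=
  DissipativeProd A ∧
    ∃ l : ℝ, 0 < l ∧ ∀ y : X₁ × X₂, ∃ x : A.domain, (l : ℂ) • (x : X₁ × X₂) - A x = y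

/-- A bounded operator is coercive if it is self-adjoint and strictly positive. -/
def Coercive {X : Type*} [NormedAddCommGroup X] [InnerProductSpace ℂ X] [CompleteSpace X]
    (T : X →L[ℂ] X) : Prop :=
  IsSelfAdjoint T ∧ ∃ c : ℝ, 0 < c ∧ ∀ x : X, c * ‖x‖ ^ 2 ≤ (⟪T x, x⟫).re

/-- The block operator `E = diag(E₁, 0)`. -/
def blockE (E₁ : X₁ →L[ℂ] X₁) : X₁ × X₂ → X₁ × X₂ := fun x => (E₁ x.1, 0)

/-- The block operator `Q = diag(Q₁, Q₂)`. -/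
def blockQ (Q₁ : X₁ →L[ℂ] X₁) (Q₂ : X₂ →L[ℂ] X₂) : X₁ × X₂ → X₁ × X₂ :=
  fun x => (Q₁ x.1, Q₂ x.2)

/-- The pencil `s E - A Q` on its natural domain `{x : Q x ∈ D(A)}`. -/
def pencilApply {X : Type*} [NormedAddCommGroup X] [NormedSpace ℂ X]
    (s : ℂ) (E Q : X → X) (A : X →ₗ.[ℂ] X) (x : {x : X // Q x ∈ A.domain}) : X :=
  s • E x.1 - A ⟨Q x.1, x.2⟩

/-- `s E - A Q` is boundedly invertible: it is a bijection from its domain onto `X`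
with bounded inverse. -/
def PencilBddInv {X : Type*} [NormedAddCommGroup X] [NormedSpace ℂ X]
    (s : ℂ) (E Q : X → X) (A : X →ₗ.[ℂ] X) : Prop :=
  Function.Bijective (pencilApply s E Q A) ∧
    ∃ C : ℝ, 0 < C ∧ ∀ x : {x : X // Q x ∈ A.domain}, ‖x.1‖ ≤ C * ‖pencilApply s E Q A x‖

/-- Neumann series step: surjectivity of an operator bounded below by `1 / C` survives a bounded
perturbation `N` with `C ‖N‖ < 1`. -/
lemma surjective_add_of_small {X : Type*} [NormedAddCommGroup X] [NormedSpace ℂ X]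
    [CompleteSpace X] {D : Submodule ℂ X} (L : D →ₗ[ℂ] X) (N : X →L[ℂ] X) {C : ℝ} (hC : 0 < C)
    (hL : ∀ y : D, ‖(y : X)‖ ≤ C * ‖L y‖) (hs : Function.Surjective L) (hN : C * ‖N‖ < 1) :
    Function.Surjective (fun y : D => L y + N y) := by
  have hinj : Function.Injective L := by
    rw [← LinearMap.ker_eq_bot, LinearMap.ker_eq_bot']
    intro y hy
    have h := hL y
    rw [hy, norm_zero, mul_zero] at h
    exact Subtype.ext (norm_le_zero_iff.mp h)
  let e := LinearEquiv.ofBijective L ⟨hinj, hs⟩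
  have he : ∀ z, L (e.symm z) = z := fun z => e.apply_symm_apply z
  let R : X →L[ℂ] X := LinearMap.mkContinuous (D.subtype.comp e.symm.toLinearMap) C (by
    intro z
    have h := hL (e.symm z)
    rw [he] at h
    exact h)
  have hR : ‖R‖ ≤ C := LinearMap.mkContinuous_norm_le _ hC.le _
  have hlt : ‖-(N * R)‖ < 1 := by
    rw [norm_neg]
    calc ‖N * R‖ ≤ ‖N‖ * ‖R‖ := norm_mul_le _ _
      _ ≤ ‖N‖ * C := by gcongr
      _ < 1 := by linarith
  obtain ⟨u, hu⟩ := isUnit_one_sub_of_norm_lt_one hlt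
  intro f
  -- With `z = (1 + N R)⁻¹ f`, the point `L⁻¹ z` is a preimage of `f`.
  refine ⟨e.symm ((↑u⁻¹ : X →L[ℂ] X) f), ?_⟩
  have h1 : (u : X →L[ℂ] X) ((↑u⁻¹ : X →L[ℂ] X) f) = f := by
    rw [← mul_apply_eq_comp, Units.mul_inv, one_apply_eq_self]
  rw [hu] at h1
  simp only [he]
  have h2 : R ((↑u⁻¹ : X →L[ℂ] X) f) = (e.symm ((↑u⁻¹ : X →L[ℂ] X) f) : X) := rfl
  rw [← h2]
  simpa using h1

/-- Method of continuity for the segment `L + t K`, with `L` unbounded and `K` bounded. -/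
lemma surjective_of_continuity {X : Type*} [NormedAddCommGroup X] [NormedSpace ℂ X]
    [CompleteSpace X] {D : Submodule ℂ X} (L : D →ₗ[ℂ] X) (K : X →L[ℂ] X) {C : ℝ} (hC : 0 < C)
    (hL : ∀ t : ℝ, 0 ≤ t → t ≤ 1 → ∀ y : D, ‖(y : X)‖ ≤ C * ‖L y + (t : ℂ) • K y‖)
    (hs : Function.Surjective L) :
    Function.Surjective (fun y : D => L y + K y) := by
  obtain ⟨n, hn⟩ := exists_nat_gt (C * ‖K‖)
  have hn0 : (0 : ℝ) < n := lt_of_le_of_lt (by positivity) hn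
  have key : ∀ k : ℕ, k ≤ n →
      Function.Surjective (fun y : D => L y + (((k / n : ℝ)) : ℂ) • K y) := by
    intro k
    induction k with
    | zero => intro _; simpa using hs
    | succ k ih =>
      intro hk
      have hkn : (k : ℝ) / n ≤ 1 := by
        rw [div_le_one hn0]
        exact_mod_cast (Nat.le_of_succ_le hk)
      have h := surjective_add_of_small
        (L + (((k / n : ℝ)) : ℂ) • (K.toLinearMap.comp D.subtype))
        (((1 / n : ℝ) : ℂ) • K) hC
        (fun y => hL _ (by positivity) hkn y) (ih (Nat.le_of_succ_le hk)) (by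
          rw [norm_smul, Complex.norm_real, Real.norm_of_nonneg (by positivity)]
          calc C * (1 / n * ‖K‖) = C * ‖K‖ / n := by ring
            _ < 1 := by rwa [div_lt_one hn0])
      intro f
      obtain ⟨y, hy⟩ := h f
      refine ⟨y, ?_⟩
      rw [← hy]
      simp only [LinearMap.add_apply, LinearMap.smul_apply, LinearMap.comp_apply,
        ContinuousLinearMap.coe_coe, Submodule.subtype_apply, _root_.smul_apply]
      rw [add_assoc, ← add_smul]
      push_cast
      congr 2
      ring
  intro f
  obtain ⟨y, hy⟩ := key n le_rfl f
  refine ⟨y, ?_⟩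
  rw [← hy]
  have hne : (n : ℝ) ≠ 0 := ne_of_gt hn0
  simp [div_self hne]

/-- The a priori estimate in terms of `a = ‖y‖`, `b = ‖y₁‖`, `u = ‖A y‖`, `F = ‖f‖`, with a constant
that does not depend on `t`. -/
lemma apriori_real {l g m k r : ℝ} (hl : 0 < l) (hg : 0 < g) (hm : 0 < m) (hk : 0 ≤ k)
    (hr : 0 ≤ r) {t a b u F : ℝ} (ht0 : 0 ≤ t) (ht1 : t ≤ 1) (hb : 0 ≤ b)
    (hu : 0 ≤ u) (hF : 0 ≤ F)
    (h1 : (1 - t) * l * a ^ 2 + t * g * b ^ 2 ≤ 2 * F * a)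
    (h2 : u ≤ (1 - t) * l * a + t * (r * k * b) + F)
    (h3 : m * a ^ 2 ≤ k ^ 2 * b ^ 2 + u ^ 2) :
    a ≤ (4 / l + (4 * (k ^ 2 * (1 + 2 * r ^ 2)) / g + 18) / m + 1) * F := by
  have hP : 0 ≤ 4 * (k ^ 2 * (1 + 2 * r ^ 2)) / g := by positivity
  set P := 4 * (k ^ 2 * (1 + 2 * r ^ 2)) / g with hPdef
  have e1 : 0 ≤ 4 / l * F := by positivity
  have e2 : 0 ≤ (P + 18) / m * F := by positivity
  rcases le_or_gt a F with haF | haF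
  · nlinarith
  have ha_pos : 0 < a := lt_of_le_of_lt hF haF
  have h4 : (1 - t) * l * a ≤ 2 * F := by
    have : 0 ≤ t * g * b ^ 2 := by positivity
    refine le_of_mul_le_mul_right ?_ ha_pos
    nlinarith
  rcases le_or_gt t (1 / 2) with ht | ht
  · have h5 : a ≤ 4 / l * F := by
      rw [div_mul_eq_mul_div, le_div_iff₀ hl]
      nlinarith [mul_pos hl ha_pos]
    nlinarith
  · have h6 : g * b ^ 2 ≤ 4 * F * a := by
      have : 0 ≤ (1 - t) * l * a ^ 2 := by
        have : 0 ≤ 1 - t := by linarith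
        positivity
      have : 0 ≤ g * b ^ 2 := by positivity
      nlinarith
    have h7 : u ≤ 3 * F + r * k * b := by
      have : 0 ≤ r * k * b := by positivity
      nlinarith
    have h8 : u ^ 2 ≤ 18 * F ^ 2 + 2 * (r * k * b) ^ 2 := by
      have : u ^ 2 ≤ (3 * F + r * k * b) ^ 2 := by gcongr
      nlinarith [sq_nonneg (3 * F - r * k * b)]
    have h9 : k ^ 2 * (1 + 2 * r ^ 2) * b ^ 2 ≤ P * (F * a) := by
      have : k ^ 2 * (1 + 2 * r ^ 2) * b ^ 2 = k ^ 2 * (1 + 2 * r ^ 2) / g * (g * b ^ 2) := by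
        field_simp
      rw [this]
      calc _ ≤ k ^ 2 * (1 + 2 * r ^ 2) / g * (4 * F * a) := by gcongr
        _ = P * (F * a) := by rw [hPdef]; ring
    have h10 : m * a ^ 2 ≤ (P + 18) * (F * a) := by
      have : F ^ 2 ≤ F * a := by nlinarith
      nlinarith
    have h11 : a ≤ (P + 18) / m * F := by
      rw [div_mul_eq_mul_div, le_div_iff₀ hm]
      refine le_of_mul_le_mul_right ?_ ha_pos
      nlinarith
    nlinarith

lemma reInner2_le (x y : X₁ × X₂) : reInner2 x y ≤ 2 * ‖x‖ * ‖y‖ := by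
  have h1 : (⟪x.1, y.1⟫).re ≤ ‖x‖ * ‖y‖ :=
    (re_inner_le_norm (𝕜 := ℂ) x.1 y.1).trans
      (mul_le_mul (norm_fst_le x) (norm_fst_le y) (norm_nonneg _) (norm_nonneg _))
  have h2 : (⟪x.2, y.2⟫).re ≤ ‖x‖ * ‖y‖ :=
    (re_inner_le_norm (𝕜 := ℂ) x.2 y.2).trans
      (mul_le_mul (norm_snd_le x) (norm_snd_le y) (norm_nonneg _) (norm_nonneg _))
  unfold reInner2
  linarith

/-- The norm of `X₁ × X₂` is the maximum norm, whence an inequality instead of an equality. -/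
lemma norm_sq_le_reInner2 (y : X₁ × X₂) : ‖y‖ ^ 2 ≤ reInner2 y y := by
  have h1 : (⟪y.1, y.1⟫).re = ‖y.1‖ ^ 2 := inner_self_eq_norm_sq (𝕜 := ℂ) y.1
  have h2 : (⟪y.2, y.2⟫).re = ‖y.2‖ ^ 2 := inner_self_eq_norm_sq (𝕜 := ℂ) y.2
  unfold reInner2
  rw [h1, h2, Prod.norm_def]
  rcases max_cases ‖y.1‖ ‖y.2‖ with ⟨h, _⟩ | ⟨h, _⟩ <;> rw [h] <;>
    nlinarith [sq_nonneg ‖y.1‖, sq_nonneg ‖y.2‖]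

/-- Coercivity of `E₁* Q₁` transported to `M₁ = E₁ Q₁⁻¹`. Self-adjointness makes `⟨M₁ y, y⟩` real, so
that the imaginary part of `s` does not contribute. -/
lemma coercive_transport (E₁ Q₁ : X₁ ≃L[ℂ] X₁)
    (hcoer : Coercive ((ContinuousLinearMap.adjoint (E₁ : X₁ →L[ℂ] X₁)).comp
      (Q₁ : X₁ →L[ℂ] X₁))) (s : ℂ) (hs : 0 < s.re) :
    ∃ g : ℝ, 0 < g ∧ ∀ y : X₁, g * ‖y‖ ^ 2 ≤ (⟪s • E₁ (Q₁.symm y), y⟫).re := by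
  obtain ⟨hsa, c, hc, hcb⟩ := hcoer
  set q := ‖(Q₁ : X₁ →L[ℂ] X₁)‖ + 1 with hq
  have hq0 : 0 < q := by positivity
  refine ⟨s.re * (c / q ^ 2), by positivity, fun y => ?_⟩
  set x := Q₁.symm y with hx
  have hy : y = Q₁ x := by simp [hx]
  have hn : ‖y‖ ≤ q * ‖x‖ := by
    rw [hy]
    refine ((Q₁ : X₁ →L[ℂ] X₁).le_opNorm x).trans ?_
    gcongr
    linarith
  have hform : ⟪((ContinuousLinearMap.adjoint (E₁ : X₁ →L[ℂ] X₁)).comp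
      (Q₁ : X₁ →L[ℂ] X₁)) x, x⟫ = ⟪y, E₁ x⟫ := by
    rw [hy, ContinuousLinearMap.comp_apply, ContinuousLinearMap.adjoint_inner_left]
    rfl
  have hre := hcb x
  have him : (⟪y, E₁ x⟫).im = 0 := by
    rw [← hform]
    exact hsa.isSymmetric.im_inner_apply_self x
  rw [hform] at hre
  have hflip : ⟪E₁ x, y⟫ = (starRingEnd ℂ) ⟪y, E₁ x⟫ := (inner_conj_symm _ _).symm
  have hval : (⟪s • E₁ x, y⟫).re = s.re * (⟪y, E₁ x⟫).re := by
    rw [inner_smul_left, hflip]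
    simp only [Complex.mul_re, Complex.conj_re, Complex.conj_im, him]
    ring
  rw [hval, mul_assoc]
  gcongr
  calc c / q ^ 2 * ‖y‖ ^ 2 ≤ c / q ^ 2 * (q * ‖x‖) ^ 2 := by gcongr
    _ = c * ‖x‖ ^ 2 := by field_simp
    _ ≤ _ := hre

/-- Theorem `t_commonQI`, (iv) ⇒ (ii): if `A` is maximally dissipative and
`‖E x‖² + ‖A Q x‖² ≥ m₁² ‖x‖²` on `{x : Q x ∈ D(A)}`, then `s E - A Q` is boundedly
invertible for every `s` in the open right half plane. -/
theorem statement_6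
    (A : (X₁ × X₂) →ₗ.[ℂ] (X₁ × X₂))
    (E₁ Q₁ : X₁ ≃L[ℂ] X₁) (Q₂ : X₂ ≃L[ℂ] X₂)
    (hcoer : Coercive ((ContinuousLinearMap.adjoint (E₁ : X₁ →L[ℂ] X₁)).comp
      (Q₁ : X₁ →L[ℂ] X₁)))
    (hmax : MaxDissipativeProd A)
    (hbound : ∃ m₁ : ℝ, 0 < m₁ ∧
      ∀ (x : X₁ × X₂) (h : blockQ (Q₁ : X₁ →L[ℂ] X₁) (Q₂ : X₂ →L[ℂ] X₂) x ∈ A.domain),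
        m₁ ^ 2 * ‖x‖ ^ 2 ≤ ‖blockE (E₁ : X₁ →L[ℂ] X₁) x‖ ^ 2 +
          ‖A ⟨blockQ (Q₁ : X₁ →L[ℂ] X₁) (Q₂ : X₂ →L[ℂ] X₂) x, h⟩‖ ^ 2) :
    ∀ s : ℂ, 0 < s.re →
      PencilBddInv s (blockE (E₁ : X₁ →L[ℂ] X₁))
        (blockQ (Q₁ : X₁ →L[ℂ] X₁) (Q₂ : X₂ →L[ℂ] X₂)) A := by
  obtain ⟨hdiss, l, hl, hsurj⟩ := hmax
  obtain ⟨m, hm, hbound⟩ := hbound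
  intro s hs
  obtain ⟨g, hg, hcoe⟩ := coercive_transport E₁ Q₁ hcoer s hs
  set Q : (X₁ × X₂) ≃L[ℂ] (X₁ × X₂) := Q₁.prodCongr Q₂ with hQ
  have hQb : ∀ x, blockQ (Q₁ : X₁ →L[ℂ] X₁) (Q₂ : X₂ →L[ℂ] X₂) x = Q x := fun x => rfl
  set M₁ : X₁ →L[ℂ] X₁ := (E₁ : X₁ →L[ℂ] X₁).comp (Q₁.symm : X₁ →L[ℂ] X₁) with hM₁
  set M : (X₁ × X₂) →L[ℂ] (X₁ × X₂) :=
    (ContinuousLinearMap.inl ℂ X₁ X₂).comp (M₁.comp (ContinuousLinearMap.fst ℂ X₁ X₂)) with hM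
  have hMval : ∀ y : X₁ × X₂, M y = (E₁ (Q₁.symm y.1), 0) := fun y => rfl
  have hEQ : ∀ x : X₁ × X₂, blockE (E₁ : X₁ →L[ℂ] X₁) x = M (Q x) := by
    intro x
    rw [hMval]
    simp [blockE, hQ]
  have hMn : ∀ y : X₁ × X₂, ‖M y‖ ≤ ‖M₁‖ * ‖y.1‖ := by
    intro y
    have h : ‖M y‖ = ‖M₁ y.1‖ := by
      rw [hMval, Prod.norm_def]
      simp [hM₁]
    rw [h]
    exact M₁.le_opNorm _
  set q := ‖(Q : (X₁ × X₂) →L[ℂ] (X₁ × X₂))‖ + 1 with hq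
  have hq0 : 0 < q := by positivity
  set mq := m ^ 2 / q ^ 2 with hmq
  have hmq_pos : 0 < mq := by positivity
  -- The hypothesis on `‖E x‖² + ‖A Q x‖²` in the variable `y = Q x`.
  have hlow : ∀ y : A.domain, mq * ‖(y : X₁ × X₂)‖ ^ 2 ≤
      ‖M₁‖ ^ 2 * ‖(y : X₁ × X₂).1‖ ^ 2 + ‖A y‖ ^ 2 := by
    rintro ⟨y, hy⟩
    obtain ⟨x, rfl⟩ := Q.surjective y
    have h := hbound x hy
    rw [hEQ] at h
    have hx : ‖Q x‖ ≤ q * ‖x‖ := by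
      refine ((Q : (X₁ × X₂) →L[ℂ] (X₁ × X₂)).le_opNorm x).trans ?_
      gcongr
      linarith
    have h2 : ‖M (Q x)‖ ^ 2 ≤ ‖M₁‖ ^ 2 * ‖(Q x).1‖ ^ 2 := by
      rw [← mul_pow]
      gcongr
      exact hMn _
    calc mq * ‖Q x‖ ^ 2 ≤ mq * (q * ‖x‖) ^ 2 := by gcongr
      _ = m ^ 2 * ‖x‖ ^ 2 := by rw [hmq]; field_simp
      _ ≤ _ := h
      _ ≤ _ := by gcongr; rfl
  let L : A.domain →ₗ[ℂ] (X₁ × X₂) := (l : ℂ) • A.domain.subtype - A.toFun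
  let K : (X₁ × X₂) →L[ℂ] (X₁ × X₂) := s • M - (l : ℂ) • ContinuousLinearMap.id ℂ (X₁ × X₂)
  have hLK : ∀ (t : ℝ) (y : A.domain), L y + (t : ℂ) • K y =
      (((1 - t) * l : ℝ) : ℂ) • (y : X₁ × X₂) + (t : ℂ) • (s • M y) - A y := by
    intro t y
    change ((l : ℂ) • (y : X₁ × X₂) - A y) + (t : ℂ) • (s • M y - (l : ℂ) • (y : X₁ × X₂)) = _
    push_cast
    module
  set C := 4 / l + (4 * (‖M₁‖ ^ 2 * (1 + 2 * ‖s‖ ^ 2)) / g + 18) / mq + 1 with hCdef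
  have hC : 0 < C := by positivity
  have hap : ∀ t : ℝ, 0 ≤ t → t ≤ 1 → ∀ y : A.domain,
      ‖(y : X₁ × X₂)‖ ≤ C * ‖L y + (t : ℂ) • K y‖ := by
    intro t ht0 ht1 y
    have ht_sub : 0 ≤ 1 - t := by linarith
    rw [hLK]
    set f := (((1 - t) * l : ℝ) : ℂ) • (y : X₁ × X₂) + (t : ℂ) • (s • M y) - A y with hf
    refine apriori_real hl hg hmq_pos (norm_nonneg M₁) (norm_nonneg s) ht0 ht1
      (norm_nonneg (y : X₁ × X₂).1) (norm_nonneg (A y)) (norm_nonneg _) ?_ ?_ (hlow y)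
    · have hexp : reInner2 f (y : X₁ × X₂) = (1 - t) * l * reInner2 (y : X₁ × X₂) (y : X₁ × X₂)
          + t * (⟪s • E₁ (Q₁.symm (y : X₁ × X₂).1), (y : X₁ × X₂).1⟫).re
          - reInner2 (A y) (y : X₁ × X₂) := by
        simp only [hf, reInner2, hMval, Prod.fst_sub, Prod.fst_add, Prod.smul_fst, Prod.snd_sub,
          Prod.snd_add, Prod.smul_snd, inner_sub_left, inner_add_left, smul_zero, inner_zero_left,
          Complex.sub_re, Complex.add_re, Complex.zero_re]
        simp only [inner_smul_left (𝕜 := ℂ) _ _ (((1 - t) * l : ℝ) : ℂ),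
          inner_smul_left (𝕜 := ℂ) _ _ (t : ℂ), Complex.conj_ofReal, Complex.re_ofReal_mul]
        ring
      have h1 := hdiss y
      have h2 := hcoe (y : X₁ × X₂).1
      have h3 := norm_sq_le_reInner2 (y : X₁ × X₂)
      have h4 := reInner2_le f (y : X₁ × X₂)
      have h5 := mul_le_mul_of_nonneg_left h3 (mul_nonneg ht_sub hl.le)
      have h6 := mul_le_mul_of_nonneg_left h2 ht0
      nlinarith
    · have hA : A y = (((1 - t) * l : ℝ) : ℂ) • (y : X₁ × X₂) + (t : ℂ) • (s • M y) - f := by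
        rw [hf]; abel
      have hn1 : ‖(((1 - t) * l : ℝ) : ℂ) • (y : X₁ × X₂)‖ = (1 - t) * l * ‖(y : X₁ × X₂)‖ := by
        rw [norm_smul, Complex.norm_real, Real.norm_of_nonneg (by positivity)]
      have hn2 : ‖(t : ℂ) • (s • M y)‖ ≤ t * (‖s‖ * ‖M₁‖ * ‖(y : X₁ × X₂).1‖) := by
        rw [norm_smul, norm_smul, Complex.norm_real, Real.norm_of_nonneg ht0, mul_assoc ‖s‖]
        gcongr
        exact hMn _
      calc ‖A y‖ ≤ ‖(((1 - t) * l : ℝ) : ℂ) • (y : X₁ × X₂)‖ + ‖(t : ℂ) • (s • M y)‖ + ‖f‖ := by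
            rw [hA]
            exact (norm_sub_le _ _).trans (by gcongr; exact norm_add_le _ _)
        _ ≤ _ := by rw [hn1]; gcongr
  have hsur := surjective_of_continuity L K hC hap hsurj
  have hone : ∀ y : A.domain, L y + K y = s • M y - A y := by
    intro y
    have h := hLK 1 y
    simpa using h
  have hbd : ∀ y : A.domain, ‖(y : X₁ × X₂)‖ ≤ C * ‖s • M y - A y‖ := by
    intro y
    have h := hap 1 zero_le_one le_rfl y
    rw [← hone]
    simpa using h
  have hpen : ∀ (x : X₁ × X₂) (h : Q x ∈ A.domain),
      pencilApply s (blockE (E₁ : X₁ →L[ℂ] X₁))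
        (blockQ (Q₁ : X₁ →L[ℂ] X₁) (Q₂ : X₂ →L[ℂ] X₂)) A ⟨x, h⟩ = s • M (Q x) - A ⟨Q x, h⟩ := by
    intro x h
    rw [← hEQ]
    rfl
  refine ⟨⟨?_, ?_⟩, ?_⟩
  · rintro ⟨x, hx⟩ ⟨x', hx'⟩ hxx
    rw [hQb] at hx hx'
    rw [hpen x hx, hpen x' hx'] at hxx
    have h := hbd (⟨Q x, hx⟩ - ⟨Q x', hx'⟩)
    have h0 : s • M ((⟨Q x, hx⟩ - ⟨Q x', hx'⟩ : A.domain) : X₁ × X₂)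
        - A (⟨Q x, hx⟩ - ⟨Q x', hx'⟩) = 0 := by
      rw [LinearPMap.map_sub, Submodule.coe_sub, map_sub, smul_sub, sub_sub_sub_comm, hxx, sub_self]
    rw [h0, norm_zero, mul_zero] at h
    have h1 : Q x - Q x' = 0 := norm_le_zero_iff.mp h
    exact Subtype.ext (Q.injective (sub_eq_zero.mp h1))
  · intro f
    obtain ⟨⟨y, hy⟩, hyf⟩ := hsur f
    obtain ⟨x, rfl⟩ := Q.surjective y
    refine ⟨⟨x, hy⟩, ?_⟩
    rw [hpen x hy, ← hyf]
    exact (hone ⟨Q x, hy⟩).symm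
  · set p := ‖(Q.symm : (X₁ × X₂) →L[ℂ] (X₁ × X₂))‖ + 1 with hp
    have hp0 : 0 < p := by positivity
    refine ⟨p * C, by positivity, ?_⟩
    rintro ⟨x, hx⟩
    rw [hQb] at hx
    rw [hpen x hx, mul_assoc]
    have h1 : ‖x‖ ≤ p * ‖Q x‖ := by
      calc ‖x‖ = ‖(Q.symm : (X₁ × X₂) →L[ℂ] (X₁ × X₂)) (Q x)‖ := by simp
        _ ≤ _ := ContinuousLinearMap.le_opNorm _ _
        _ ≤ _ := by gcongr; linarith
    refine h1.trans ?_
    gcongr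
    exact hbd ⟨Q x, hx⟩
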